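/- Let ζ ∈ ℂ satisfy ζ³ = 1 and ζ ≠ 1, and let a₁₀₀, a₀₁₀, b₁₀₀, c₀₀₁ ∈ ℂ. Consider the vector field F : ℂ³ → ℂ³ given by F(x₁, x₂, x₃) = (x₁·(1 + a₁₀₀x₁ + a₀₁₀x₂), ζ·x₂·(1 + b₁₀₀x₁ + x₂), ζ²·x₃·(1 + c₀₀₁x₃)). Then this system is analytically linearizable: there exist a neighborhood U of the origin in ℂ³ and a map H : ℂ³ → ℂ³ analytic on U with H(0) = 0 and derivative at 0 equal to the identity, such that for all y ∈ U, F(H(y)) = DH(y)·(y₁, ζ·y₂, ζ²·y₃), where DH(y) denotes the (Fréchet) derivative of H at y. -/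

import Mathlib

/-!
The third equation decouples and is linearized by `z ↦ z / (1 - c₀₀₁ z)`. The first two form a
planar Lotka–Volterra system with eigenvalues `1, ζ`. Multiplying time by `-ζ` turns these into
`l = -ζ` and `m = -ζ²`, both of real part `1/2`, so every small trajectory decays in backward time,
and quadratic terms decay faster than linear ones. The linearizing map sends `y` to the time-zero
point of the trajectory asymptotic to the linear trajectory `(e^{lτ} y₁, e^{mτ} y₂)` as `τ → -∞`.

With `r = e^{τ/2} ∈ (0, 1]` and `x₁ = r^{2l} U(r)`, `x₂ = r^{2m} V(r)`, the trajectory condition is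
the integral equation
`U(r) = y₁ + 2l ∫₀ʳ (a ρ^{2l-1} U² + b ρ^{2m-1} U V) dρ`, and similarly for `V`, on the Banach
algebra `C([0, 1], ℂ)`, where the kernels have modulus one. It reads `G(U, V) = (y₁, y₂)` with
`G` a quadratic perturbation of the identity (`quadMap`), so the analytic inverse function theorem
(`quadMap_local_inverse`) solves it analytically in `y`; the planar map is
`h(y) = (U(1), V(1))`.

If `(U, V)` solves the equation for `y`, then `(κ^{2l} U(κ ·), κ^{2m} V(κ ·))` solves it for
`(κ^{2l} y₁, κ^{2m} y₂)` (by `prim_dil`) and is no larger in norm, hence it is the solution given by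
the local inverse: `h(κ^{2l} y₁, κ^{2m} y₂) = (κ^{2l} U(κ), κ^{2m} V(κ))` for `0 < κ ≤ 1`.
Differentiating at `κ = 1` gives the conjugacy equation (`planar`).
-/

open Filter Topology Set MeasureTheory
open scoped unitInterval ContDiff

theorem exists_analytic_local_inverse {E : Type*} [NormedAddCommGroup E] [NormedSpace ℂ E]
    [CompleteSpace E] (G : E → E) (hG : AnalyticAt ℂ G 0) (h0 : G 0 = 0)
    (hd : HasFDerivAt G (ContinuousLinearMap.id ℂ E) 0) :
    ∃ g : E → E, AnalyticAt ℂ g 0 ∧ g 0 = 0 ∧ HasFDerivAt g (ContinuousLinearMap.id ℂ E) 0 ∧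
      (∀ᶠ x in 𝓝 0, g (G x) = x) ∧ ∀ᶠ y in 𝓝 0, G (g y) = y := by
  have hc : ContDiffAt ℂ ω G 0 := hG.contDiffAt
  have hd' : HasFDerivAt G ((ContinuousLinearEquiv.refl ℂ E : E ≃L[ℂ] E) : E →L[ℂ] E) 0 := hd
  have hs := hc.hasStrictFDerivAt' hd' (by simp)
  have hn : (ω : WithTop ℕ∞) ≠ 0 := by simp
  refine ⟨hc.localInverse hd' hn, ?_, ?_, ?_, ?_, ?_⟩
  · have := hc.to_localInverse hd' hn
    rw [h0] at this
    exact this.analyticAt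
  · have := hc.localInverse_apply_image hd' hn
    rwa [h0] at this
  · have := hs.to_localInverse.hasFDerivAt
    rw [h0] at this
    exact this
  · exact hs.eventually_left_inverse
  · have := hs.eventually_right_inverse
    rw [h0] at this
    exact this

/-- The kernel `ρ ↦ ρ ^ (2μ - 1)`; it is unimodular on `(0, ∞)` when `Re μ = 1/2`. -/
noncomputable def kern (μ : ℂ) (ρ : ℝ) : ℂ := (ρ : ℂ) ^ (2 * μ - 1)

/-- The weighted primitive `r ↦ ∫₀ʳ ρ ^ (2μ - 1) f(ρ) dρ`, with `f` extended from `[0, 1]` to `ℝ`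
by constants. -/
noncomputable def prim (μ : ℂ) (f : C(I, ℂ)) (r : ℝ) : ℂ :=
  ∫ ρ in (0 : ℝ)..r, kern μ ρ * f (projIcc 0 1 zero_le_one ρ)

theorem kern_integrable {μ : ℂ} (hμ : μ.re = 1 / 2) (f : C(I, ℂ)) (a b : ℝ) :
    IntervalIntegrable (fun ρ => kern μ ρ * f (projIcc 0 1 zero_le_one ρ)) volume a b := by
  apply IntervalIntegrable.mul_continuousOn
  · exact intervalIntegral.intervalIntegrable_cpow' (by simp [hμ])
  · exact (f.continuous.comp continuous_projIcc).continuousOn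

theorem norm_kern {μ : ℂ} (hμ : μ.re = 1 / 2) {ρ : ℝ} (hρ : 0 < ρ) : ‖kern μ ρ‖ = 1 := by
  rw [kern, Complex.norm_cpow_eq_rpow_re_of_pos hρ]
  simp [hμ]

theorem continuous_prim {μ : ℂ} (hμ : μ.re = 1 / 2) (f : C(I, ℂ)) : Continuous (prim μ f) :=
  intervalIntegral.continuous_primitive (fun a b => kern_integrable hμ f a b) 0

theorem norm_prim_le {μ : ℂ} (hμ : μ.re = 1 / 2) (f : C(I, ℂ)) (r : I) :
    ‖prim μ f r‖ ≤ ‖f‖ := by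
  have h : ‖prim μ f r‖ ≤ ‖f‖ * |(r : ℝ) - 0| := by
    apply intervalIntegral.norm_integral_le_of_norm_le_const
    intro x hx
    rw [uIoc_of_le r.2.1] at hx
    rw [norm_mul, norm_kern hμ hx.1, one_mul]
    exact f.norm_coe_le_norm _
  refine h.trans ?_
  rw [sub_zero, abs_of_nonneg r.2.1]
  exact mul_le_of_le_one_right (norm_nonneg _) r.2.2

/-- For `Re μ = 1/2` the weighted primitive is a bounded operator on `C([0, 1], ℂ)`. -/
theorem exists_primCLM {μ : ℂ} (hμ : μ.re = 1 / 2) :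
    ∃ K : C(I, ℂ) →L[ℂ] C(I, ℂ), ∀ f (r : I), K f r = prim μ f r := by
  refine ⟨LinearMap.mkContinuous
    { toFun := fun f => ⟨fun r => prim μ f r, (continuous_prim hμ f).comp continuous_subtype_val⟩
      map_add' := ?_
      map_smul' := ?_ } 1 ?_, fun f r => rfl⟩
  · intro f g
    ext r
    simp only [prim, ContinuousMap.coe_mk, ContinuousMap.add_apply, mul_add]
    exact intervalIntegral.integral_add (kern_integrable hμ f _ _) (kern_integrable hμ g _ _)
  · intro c f
    ext r
    simp only [prim, ContinuousMap.coe_mk, ContinuousMap.smul_apply, smul_eq_mul,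
      RingHom.id_apply, mul_left_comm _ c]
    exact intervalIntegral.integral_const_mul _ _
  · intro f
    rw [one_mul]
    exact (ContinuousMap.norm_le _ (norm_nonneg _)).2 fun r => norm_prim_le hμ f r

theorem hasDerivAt_prim {μ : ℂ} (hμ : μ.re = 1 / 2) (f : C(I, ℂ)) :
    HasDerivAt (prim μ f) (f 1) 1 := by
  have hc : ∀ᶠ x : ℝ in 𝓝 1,
      ContinuousAt (fun ρ : ℝ => kern μ ρ * f (projIcc 0 1 zero_le_one ρ)) x := by
    filter_upwards [lt_mem_nhds (zero_lt_one' ℝ)] with x hx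
    apply ContinuousAt.mul
    · exact Complex.continuousAt_ofReal_cpow_const _ _ (Or.inr hx.ne')
    · exact (f.continuous.comp continuous_projIcc).continuousAt
  have h := intervalIntegral.integral_hasDerivAt_right (kern_integrable hμ f 0 1)
    (ContinuousAt.stronglyMeasurableAtFilter (μ := volume) isOpen_Ioi
      (s := Ioi (0 : ℝ)) (fun x hx => by
        apply ContinuousAt.mul
        · exact Complex.continuousAt_ofReal_cpow_const _ _ (Or.inr (ne_of_gt hx))
        · exact (f.continuous.comp continuous_projIcc).continuousAt) 1 (by simp)) hc.self_of_nhds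
  have e : kern μ 1 * f (projIcc 0 1 zero_le_one 1) = f 1 := by
    rw [projIcc_right]
    simp [kern]
  rw [e] at h
  exact h

/-- The dilation `(S_κ f)(r) = f(κ r)`. -/
noncomputable def dil (κ : I) (f : C(I, ℂ)) : C(I, ℂ) := f.comp ⟨fun r => κ * r, by fun_prop⟩

theorem dil_mul (κ : I) (f g : C(I, ℂ)) : dil κ f * dil κ g = dil κ (f * g) := rfl

theorem norm_dil_le (κ : I) (f : C(I, ℂ)) : ‖dil κ f‖ ≤ ‖f‖ :=
  (ContinuousMap.norm_le _ (norm_nonneg _)).2 fun _ => f.norm_coe_le_norm _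

/-- Weighted primitives are homogeneous under dilations. -/
theorem prim_dil (μ : ℂ) (f : C(I, ℂ)) (κ : I) (hκ : 0 < (κ : ℝ)) (r : I) :
    ((κ : ℝ) : ℂ) ^ (2 * μ) * prim μ (dil κ f) r = prim μ f (κ * r : I) := by
  have hk0 : ((κ : ℝ) : ℂ) ≠ 0 := by exact_mod_cast hκ.ne'
  have h := intervalIntegral.smul_integral_comp_mul_left (a := 0) (b := (r : ℝ))
    (fun ρ => kern μ ρ * f (projIcc 0 1 zero_le_one ρ)) (κ : ℝ)
  rw [mul_zero] at h
  rw [prim, prim, show ((κ * r : I) : ℝ) = κ * r from rfl, ← h, Complex.real_smul,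
    show (2 * μ) = 1 + (2 * μ - 1) by ring, Complex.cpow_add _ _ hk0, Complex.cpow_one, mul_assoc]
  congr 1
  rw [← intervalIntegral.integral_const_mul]
  apply intervalIntegral.integral_congr
  intro x hx
  rw [uIcc_of_le r.2.1] at hx
  have hx' : x ∈ I := ⟨hx.1, hx.2.trans r.2.2⟩
  have e : projIcc (0 : ℝ) 1 zero_le_one (κ * x) = κ * ⟨x, hx'⟩ :=
    projIcc_of_mem zero_le_one (κ * (⟨x, hx'⟩ : I)).2
  simp only [e, projIcc_of_mem zero_le_one hx']
  rw [kern, kern, Complex.ofReal_mul, Complex.mul_cpow_ofReal_nonneg hκ.le hx.1, ← mul_assoc]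
  congr 1

/-- A perturbation of the identity of `A × A` by a quadratic map of Lotka–Volterra type. -/
noncomputable def quadMap {A : Type*} [NormedCommRing A] [NormedAlgebra ℂ A] (K₁ K₂ K₃ K₄ : A →L[ℂ] A)
    (U : A × A) : A × A :=
  (U.1 - (K₁ (U.1 * U.1) + K₂ (U.1 * U.2)), U.2 - (K₃ (U.1 * U.2) + K₄ (U.2 * U.2)))

theorem quadMap_local_inverse {A : Type*} [NormedCommRing A] [NormedAlgebra ℂ A]
    [CompleteSpace A] (K₁ K₂ K₃ K₄ : A →L[ℂ] A) :
    ∃ g : A × A → A × A, AnalyticAt ℂ g 0 ∧ g 0 = 0 ∧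
      HasFDerivAt g (ContinuousLinearMap.id ℂ (A × A)) 0 ∧
      (∀ᶠ x in 𝓝 0, g (quadMap K₁ K₂ K₃ K₄ x) = x) ∧
      ∀ᶠ y in 𝓝 0, quadMap K₁ K₂ K₃ K₄ (g y) = y := by
  apply exists_analytic_local_inverse
  · have a1 : AnalyticAt ℂ (fun U : A × A => U.1) 0 := analyticAt_fst
    have a2 : AnalyticAt ℂ (fun U : A × A => U.2) 0 := analyticAt_snd
    have k : ∀ (T : A →L[ℂ] A) (f : A × A → A), AnalyticAt ℂ f 0 →
        AnalyticAt ℂ (fun U => T (f U)) 0 :=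
      fun T f hf => (T.analyticAt _).comp hf
    refine AnalyticAt.prod ?_ ?_
    · exact a1.sub ((k K₁ _ (a1.mul a1)).add (k K₂ _ (a1.mul a2)))
    · exact a2.sub ((k K₃ _ (a1.mul a2)).add (k K₄ _ (a2.mul a2)))
  · simp [quadMap]
  · have h1 : HasFDerivAt (fun U : A × A => U.1) (ContinuousLinearMap.fst ℂ A A) 0 :=
      hasFDerivAt_fst
    have h2 : HasFDerivAt (fun U : A × A => U.2) (ContinuousLinearMap.snd ℂ A A) 0 :=
      hasFDerivAt_snd
    -- products of functions vanishing at `0` have zero derivative there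
    have p : ∀ (T : A →L[ℂ] A) (f g : A × A → A) (f' g' : A × A →L[ℂ] A), HasFDerivAt f f' 0 →
        HasFDerivAt g g' 0 → f 0 = 0 → g 0 = 0 →
        HasFDerivAt (fun U => T (f U * g U)) (0 : A × A →L[ℂ] A) 0 := by
      intro T f g f' g' hf hg f0 g0
      have := T.hasFDerivAt.comp 0 (hf.mul hg)
      refine this.congr_fderiv (ContinuousLinearMap.ext fun x => ?_)
      change T (f 0 * g' x + g 0 * f' x) = 0
      rw [f0, g0, zero_mul, zero_mul, add_zero, map_zero]
    have r1 := h1.sub ((p K₁ _ _ _ _ h1 h1 rfl rfl).add (p K₂ _ _ _ _ h1 h2 rfl rfl))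
    have r2 := h2.sub ((p K₃ _ _ _ _ h1 h2 rfl rfl).add (p K₄ _ _ _ _ h2 h2 rfl rfl))
    rw [add_zero, sub_zero] at r1 r2
    exact r1.prodMk r2

/-- Linearization of the planar subsystem formed by the first two equations. -/
theorem planar (ζ : ℂ) (hζ : ζ.re = -1 / 2) (hζ2 : (ζ ^ 2).re = -1 / 2) (a b c : ℂ) :
    ∃ h : ℂ × ℂ → ℂ × ℂ, AnalyticAt ℂ h 0 ∧ h 0 = 0 ∧
      HasFDerivAt h (ContinuousLinearMap.id ℂ (ℂ × ℂ)) 0 ∧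
      ∀ᶠ y in 𝓝 0, fderiv ℂ h y (y.1, ζ * y.2) =
        ((h y).1 * (1 + a * (h y).1 + b * (h y).2),
          ζ * (h y).2 * (1 + c * (h y).1 + (h y).2)) := by
  set l : ℂ := -ζ with hl
  set m : ℂ := -ζ ^ 2 with hm
  have hlr : l.re = 1 / 2 := by rw [hl, Complex.neg_re, hζ]; norm_num
  have hmr : m.re = 1 / 2 := by rw [hm, Complex.neg_re, hζ2]; norm_num
  have hml : m = ζ * l := by rw [hm, hl]; ring
  have hl0 : l ≠ 0 := by
    intro h
    rw [h] at hlr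
    norm_num at hlr
  obtain ⟨K, hK⟩ := exists_primCLM hlr
  obtain ⟨M, hM⟩ := exists_primCLM hmr
  obtain ⟨g, hga, hg0, hgd, hgl, hgr⟩ := quadMap_local_inverse ((2 * l * a) • K) ((2 * l * b) • M)
    ((2 * m * c) • K) ((2 * m) • M)
  set G := quadMap ((2 * l * a) • K) ((2 * l * b) • M) ((2 * m * c) • K) ((2 * m) • M) with hG
  let C : ℂ →L[ℂ] C(I, ℂ) := ContinuousLinearMap.const ℂ I
  let ev : C(I, ℂ) →L[ℂ] ℂ := ContinuousMap.evalCLM ℂ 1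
  let CC : ℂ × ℂ →L[ℂ] C(I, ℂ) × C(I, ℂ) := C.prodMap C
  let ee : C(I, ℂ) × C(I, ℂ) →L[ℂ] ℂ × ℂ := ev.prodMap ev
  let h : ℂ × ℂ → ℂ × ℂ := fun y => ee (g (CC y))
  have hCC0 : CC 0 = 0 := map_zero CC
  have hha : AnalyticAt ℂ h 0 := by
    have : AnalyticAt ℂ (fun y => g (CC y)) 0 :=
      AnalyticAt.comp (by rw [hCC0]; exact hga) (CC.analyticAt 0)
    exact (ee.analyticAt _).comp this
  refine ⟨h, hha, ?_, ?_, ?_⟩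
  · simp only [h, hCC0, hg0, map_zero]
  · have t1 : HasFDerivAt (fun y => g (CC y))
        ((ContinuousLinearMap.id ℂ (C(I, ℂ) × C(I, ℂ))).comp CC) 0 :=
      HasFDerivAt.comp 0 (by rw [hCC0]; exact hgd) CC.hasFDerivAt
    exact ee.hasFDerivAt.comp 0 t1
  obtain ⟨ε, hε, hball⟩ := Metric.eventually_nhds_iff.1 hgl
  have hCt : Tendsto CC (𝓝 0) (𝓝 0) := by
    have := CC.continuous.tendsto 0
    rwa [hCC0] at this
  have hgt : Tendsto g (𝓝 0) (𝓝 0) := by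
    have := hga.continuousAt.tendsto
    rwa [hg0] at this
  filter_upwards [hCt.eventually hgr, (hgt.comp hCt).eventually (Metric.ball_mem_nhds 0 hε),
    hha.eventually_analyticAt] with y hy1 hy2 hy3
  obtain ⟨U, V, hUV⟩ : ∃ U V, g (CC y) = (U, V) := ⟨_, _, rfl⟩
  rw [hUV] at hy1
  have hy2 : ‖(U, V)‖ < ε := by
    rw [← hUV]
    exact mem_ball_zero_iff.1 hy2
  have hh : h y = (U 1, V 1) := by simp only [h, hUV]; rfl
  have hU : ∀ r : I, U r - (2 * l * a * prim l (U * U) r + 2 * l * b * prim m (U * V) r) = y.1 := by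
    intro r
    have := congrArg (fun W => W.1 r) hy1
    simp [hG, quadMap, hK, hM] at this
    exact this
  have hV : ∀ r : I, V r - (2 * m * c * prim l (U * V) r + 2 * m * prim m (V * V) r) = y.2 := by
    intro r
    have := congrArg (fun W => W.2 r) hy1
    simp [hG, quadMap, hK, hM] at this
    exact this
  -- the dilated trajectory is the one with asymptotic data moved along the linear flow
  have key : ∀ κ : I, 0 < (κ : ℝ) →
      h (((κ : ℝ) : ℂ) ^ (2 * l) * y.1, ((κ : ℝ) : ℂ) ^ (2 * m) * y.2) =
        (((κ : ℝ) : ℂ) ^ (2 * l) * U κ, ((κ : ℝ) : ℂ) ^ (2 * m) * V κ) := by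
    intro κ hκ
    set α := ((κ : ℝ) : ℂ) ^ (2 * l) with hα
    set β := ((κ : ℝ) : ℂ) ^ (2 * m) with hβ
    have nα : ∀ μ : ℂ, μ.re = 1 / 2 → ‖((κ : ℝ) : ℂ) ^ (2 * μ)‖ ≤ 1 := by
      intro μ hμ
      rw [Complex.norm_cpow_eq_rpow_re_of_pos hκ]
      simpa [hμ] using κ.2.2
    have hW : G (α • dil κ U, β • dil κ V) = CC (α * y.1, β * y.2) := by
      have e1 := fun r => prim_dil l (U * U) κ hκ r
      have e2 := fun r => prim_dil m (U * V) κ hκ r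
      have e3 := fun r => prim_dil l (U * V) κ hκ r
      have e4 := fun r => prim_dil m (V * V) κ hκ r
      apply Prod.ext
      · ext r
        have h1 := hU (κ * r)
        rw [← e1, ← e2] at h1
        change _ = α * y.1
        rw [← h1]
        simp only [hG, quadMap, smul_mul_smul_comm, dil_mul, map_smul, ContinuousMap.sub_apply,
          ContinuousMap.add_apply, ContinuousMap.smul_apply, smul_eq_mul, hK, hM,
          _root_.smul_apply]
        change α * U (κ * r) - _ = _
        ring
      · ext r
        have h1 := hV (κ * r)
        rw [← e3, ← e4] at h1
        change _ = β * y.2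
        rw [← h1]
        simp only [hG, quadMap, smul_mul_smul_comm, dil_mul, map_smul, ContinuousMap.sub_apply,
          ContinuousMap.add_apply, ContinuousMap.smul_apply, smul_eq_mul, hK, hM,
          _root_.smul_apply]
        change β * V (κ * r) - _ = _
        ring
    have hn : ‖(α • dil κ U, β • dil κ V)‖ < ε := by
      refine lt_of_le_of_lt ?_ hy2
      have t : ∀ (γ : ℂ) (f : C(I, ℂ)), ‖γ‖ ≤ 1 → ‖γ • dil κ f‖ ≤ ‖f‖ := fun γ f hγ => by
        rw [norm_smul]
        exact (mul_le_of_le_one_left (norm_nonneg _) hγ).trans (norm_dil_le κ f)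
      exact max_le_max (t α U (nα l hlr)) (t β V (nα m hmr))
    have hg := hball (y := (α • dil κ U, β • dil κ V)) (by rwa [dist_zero_right])
    rw [hW] at hg
    simp only [h, hg]
    change (α * U (κ * 1), β * V (κ * 1)) = _
    rw [mul_one]
  have hpow : ∀ μ : ℂ, HasDerivAt (fun κ : ℝ => (κ : ℂ) ^ (2 * μ)) (2 * μ) 1 := by
    intro μ
    have h1 : HasDerivAt (fun z : ℂ => z ^ (2 * μ)) (2 * μ) ((1 : ℝ) : ℂ) := by
      have := (hasDerivAt_id ((1 : ℝ) : ℂ)).cpow_const (c := 2 * μ) (by simp)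
      simpa using this
    exact h1.comp_ofReal
  -- the derivative of the left-hand side of `key` at `κ = 1`
  have hL : HasDerivAt (fun κ : ℝ => h ((κ : ℂ) ^ (2 * l) * y.1, (κ : ℂ) ^ (2 * m) * y.2))
      (fderiv ℂ h y (2 * l * y.1, 2 * m * y.2)) 1 := by
    have hin : HasDerivAt (fun κ : ℝ => ((κ : ℂ) ^ (2 * l) * y.1, (κ : ℂ) ^ (2 * m) * y.2))
        (2 * l * y.1, 2 * m * y.2) 1 :=
      ((hpow l).mul_const y.1).prodMk ((hpow m).mul_const y.2)
    have hfd : HasFDerivAt h ((fderiv ℂ h y).restrictScalars ℝ)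
        ((((1 : ℝ) : ℂ) ^ (2 * l) * y.1, ((1 : ℝ) : ℂ) ^ (2 * m) * y.2)) := by
      simpa using hy3.differentiableAt.hasFDerivAt.restrictScalars ℝ
    exact hfd.comp_hasDerivAt 1 hin
  -- the right-hand side, with the trajectory continued beyond `κ = 1` by the integral equation
  have hR : HasDerivAt (fun κ : ℝ =>
      ((κ : ℂ) ^ (2 * l) * (y.1 + (2 * l * a * prim l (U * U) κ + 2 * l * b * prim m (U * V) κ)),
      (κ : ℂ) ^ (2 * m) * (y.2 + (2 * m * c * prim l (U * V) κ + 2 * m * prim m (V * V) κ))))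
      (2 * l * (U 1 * (1 + a * U 1 + b * V 1)), 2 * m * (V 1 * (1 + c * U 1 + V 1))) 1 := by
    have u1 := hU 1
    have v1 := hV 1
    rw [sub_eq_iff_eq_add, Icc.coe_one] at u1 v1
    have d1 := (hpow l).mul ((((hasDerivAt_prim hlr (U * U)).const_mul (2 * l * a)).add
      ((hasDerivAt_prim hmr (U * V)).const_mul (2 * l * b))).const_add y.1)
    have d2 := (hpow m).mul ((((hasDerivAt_prim hlr (U * V)).const_mul (2 * m * c)).add
      ((hasDerivAt_prim hmr (V * V)).const_mul (2 * m))).const_add y.2)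
    refine HasDerivAt.prodMk (d1.congr_deriv ?_) (d2.congr_deriv ?_)
    · simp only [Pi.add_apply, ← u1, Complex.ofReal_one, Complex.one_cpow, ContinuousMap.mul_apply]
      ring
    · simp only [Pi.add_apply, ← v1, Complex.ofReal_one, Complex.one_cpow, ContinuousMap.mul_apply]
      ring
  have hLR := (hR.hasDerivWithinAt (s := Ioc 0 1)).congr (f₁ := fun κ : ℝ =>
      h ((κ : ℂ) ^ (2 * l) * y.1, (κ : ℂ) ^ (2 * m) * y.2)) (by
    intro κ hκ
    have hκI : κ ∈ I := ⟨hκ.1.le, hκ.2⟩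
    have := key ⟨κ, hκI⟩ hκ.1
    simp only at this
    have u := sub_eq_iff_eq_add.1 (hU ⟨κ, hκI⟩)
    have v := sub_eq_iff_eq_add.1 (hV ⟨κ, hκI⟩)
    rw [this, u, v]) (by
    have := key 1 one_pos
    have u := sub_eq_iff_eq_add.1 (hU 1)
    have v := sub_eq_iff_eq_add.1 (hV 1)
    rw [u, v] at this
    exact this)
  have hud : UniqueDiffWithinAt ℝ (Ioc (0 : ℝ) 1) 1 :=
    uniqueDiffOn_Ioc 0 1 1 ⟨one_pos, le_rfl⟩
  have heq := hud.eq_deriv _ hL.hasDerivWithinAt hLR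
  have hsm : ((2 * l * y.1, 2 * m * y.2) : ℂ × ℂ) = (2 * l) • (y.1, ζ * y.2) := by
    rw [hml, Prod.smul_mk, smul_eq_mul, smul_eq_mul]
    congr 1
    ring
  have h2l : 2 * l ≠ 0 := mul_ne_zero two_ne_zero hl0
  rw [hsm, map_smul] at heq
  apply smul_right_injective _ h2l
  simp only
  rw [heq, hh, hml, Prod.smul_mk, smul_eq_mul, smul_eq_mul]
  congr 1
  ring

theorem re_of_cube_root {ζ : ℂ} (h3 : ζ ^ 3 = 1) (h1 : ζ ≠ 1) : ζ.re = -1 / 2 := by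
  have hq : ζ ^ 2 + ζ + 1 = 0 := by
    have : (ζ - 1) * (ζ ^ 2 + ζ + 1) = 0 := by linear_combination h3
    exact (mul_eq_zero.1 this).resolve_left (sub_ne_zero.2 h1)
  have hr := congrArg Complex.re hq
  have hi := congrArg Complex.im hq
  simp [pow_two] at hr hi
  have hi' : ζ.im * (2 * ζ.re + 1) = 0 := by linarith
  rcases mul_eq_zero.1 hi' with h | h
  · rw [h] at hr
    nlinarith [sq_nonneg (2 * ζ.re + 1)]
  · linarith

/-- The quadratic system (case (8))
ẋ₁ = x₁(1 + a₁₀₀x₁ + a₀₁₀x₂), ẋ₂ = ζx₂(1 + b₁₀₀x₁ + x₂),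
ẋ₃ = ζ²x₃(1 + c₀₀₁x₃) is analytically linearizable. -/
theorem stmt_18 (ζ : ℂ) (h3 : ζ ^ 3 = 1) (h1 : ζ ≠ 1)
    (a₁₀₀ a₀₁₀ b₁₀₀ c₀₀₁ : ℂ)
    (F : ℂ × ℂ × ℂ → ℂ × ℂ × ℂ)
    (hF : ∀ x : ℂ × ℂ × ℂ, F x =
      (x.1 * (1 + a₁₀₀ * x.1 + a₀₁₀ * x.2.1),
       ζ * x.2.1 * (1 + b₁₀₀ * x.1 + x.2.1),
       ζ ^ 2 * x.2.2 * (1 + c₀₀₁ * x.2.2))) :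
    ∃ (U : Set (ℂ × ℂ × ℂ)) (H : ℂ × ℂ × ℂ → ℂ × ℂ × ℂ),
      U ∈ nhds (0 : ℂ × ℂ × ℂ) ∧ (∀ y ∈ U, AnalyticAt ℂ H y) ∧
      H 0 = 0 ∧ fderiv ℂ H 0 = ContinuousLinearMap.id ℂ (ℂ × ℂ × ℂ) ∧
      ∀ y ∈ U, F (H y) = fderiv ℂ H y (y.1, ζ * y.2.1, ζ ^ 2 * y.2.2) := by
  have hζ := re_of_cube_root h3 h1
  have hζ2 : (ζ ^ 2).re = -1 / 2 := by
    apply re_of_cube_root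
    · rw [← pow_mul, mul_comm, pow_mul, h3, one_pow]
    · intro h
      apply h1
      linear_combination h3 - ζ * h
  obtain ⟨h, ha, h0, hd, hode⟩ := planar ζ hζ hζ2 a₁₀₀ a₀₁₀ b₁₀₀
  let k : ℂ → ℂ := fun z => z / (1 - c₀₀₁ * z)
  have hk : ∀ z, 1 - c₀₀₁ * z ≠ 0 → HasDerivAt k (1 / (1 - c₀₀₁ * z) ^ 2) z := by
    intro z hz
    have := (hasDerivAt_id z).div (((hasDerivAt_id z).const_mul c₀₀₁).const_sub 1) hz
    refine this.congr_deriv ?_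
    simp only [id]
    ring
  let P : ℂ × ℂ × ℂ →L[ℂ] ℂ × ℂ :=
    (ContinuousLinearMap.fst ℂ ℂ (ℂ × ℂ)).prod
      ((ContinuousLinearMap.fst ℂ ℂ ℂ).comp (ContinuousLinearMap.snd ℂ ℂ (ℂ × ℂ)))
  let Q : ℂ × ℂ × ℂ →L[ℂ] ℂ :=
    (ContinuousLinearMap.snd ℂ ℂ ℂ).comp (ContinuousLinearMap.snd ℂ ℂ (ℂ × ℂ))
  have hP : ∀ y, P y = (y.1, y.2.1) := fun y => rfl
  have hQ : ∀ y, Q y = y.2.2 := fun y => rfl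
  -- `R` reassociates the coordinates
  let R : (ℂ × ℂ) × ℂ →L[ℂ] ℂ × ℂ × ℂ := (ContinuousLinearEquiv.prodAssoc ℂ ℂ ℂ ℂ : _ →L[ℂ] _)
  have hR : ∀ w, R w = (w.1.1, w.1.2, w.2) := fun w => rfl
  let H : ℂ × ℂ × ℂ → ℂ × ℂ × ℂ := fun y => R (h (P y), k (Q y))
  have hH : ∀ y L, HasFDerivAt h L (P y) → 1 - c₀₀₁ * Q y ≠ 0 →
      HasFDerivAt H (R.comp ((L.comp P).prod
        (((1 / (1 - c₀₀₁ * Q y) ^ 2 : ℂ)) • Q))) y := by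
    intro y L hL hy
    have t1 : HasFDerivAt (fun y => h (P y)) (L.comp P) y := hL.comp y P.hasFDerivAt
    have t2 : HasFDerivAt (fun y => k (Q y)) ((1 / (1 - c₀₀₁ * Q y) ^ 2 : ℂ) • Q) y :=
      (hk (Q y) hy).comp_hasFDerivAt y Q.hasFDerivAt
    exact R.hasFDerivAt.comp y (t1.prodMk t2)
  have hPt : Tendsto P (𝓝 0) (𝓝 0) := by
    have := P.continuous.tendsto 0
    rwa [map_zero] at this
  have hne : ∀ᶠ y : ℂ × ℂ × ℂ in 𝓝 0, 1 - c₀₀₁ * Q y ≠ 0 := by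
    have : ContinuousAt (fun y : ℂ × ℂ × ℂ => 1 - c₀₀₁ * Q y) 0 := by fun_prop
    exact this.eventually_ne (by simp)
  refine ⟨_, H, (hPt.eventually hode).and ((hPt.eventually ha.eventually_analyticAt).and hne),
    ?_, ?_, ?_, ?_⟩
  · rintro y ⟨-, h2, h3⟩
    have t1 : AnalyticAt ℂ (fun y => h (P y)) y := AnalyticAt.comp h2 (P.analyticAt y)
    have t2 : AnalyticAt ℂ (fun y => k (Q y)) y :=
      (Q.analyticAt y).div (analyticAt_const.sub (analyticAt_const.mul (Q.analyticAt y))) h3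
    exact (R.analyticAt _).comp (t1.prod t2)
  · simp only [H, map_zero, h0, k, zero_div]
    rfl
  · rw [(hH 0 _ (by rw [map_zero]; exact hd) (by simp)).fderiv]
    ext <;> simp [hR, hP, hQ]
  · rintro y ⟨h1, h2, h3⟩
    rw [(hH y _ h2.differentiableAt.hasFDerivAt h3).fderiv, hF]
    change _ = R (fderiv ℂ h (P y) ((P y).1, ζ * (P y).2),
      (1 / (1 - c₀₀₁ * Q y) ^ 2 : ℂ) * (ζ ^ 2 * Q y))
    rw [h1, hR]
    simp only [H, hR, k, Prod.mk.injEq, true_and]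
    have e := mul_inv_cancel₀ h3
    simp only [div_eq_mul_inv, ← inv_pow]
    generalize (1 - c₀₀₁ * Q y)⁻¹ = w at e ⊢
    linear_combination (-(ζ ^ 2 * Q y * w)) * e
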